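/- Let k > 0 and λ > 0 be real numbers, let d ∈ ℝ² be a unit vector and d⊥ = (−d₂, d₁) its rotation by π/2. Define w : ℝ² → ℝ by w(x) = (1/(k²λ²))·(2(x·d⊥)²/λ² − 1) and the complex phase φ : ℝ² → ℂ by φ(x) = i·k·(x·d)·(1 + w(x)) − (x·d⊥)²/λ². Then for every x ∈ ℝ², writing D_v φ(x) for the directional derivative of φ at x in direction v, one has (D_d φ(x))² + (D_{d⊥} φ(x))² = −k²·(1 + w(x))² − 16·(x·d)²·(x·d⊥)²/(k²λ⁸) − 16·i·(x·d)·(x·d⊥)²/(k·λ⁶) + 4·(x·d⊥)²/λ⁴. -/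

import Mathlib

open scoped RealInnerProductSpace

/-! Write `a = x·d` and `b = x·d⊥`. The phase is affine in `a`, namely `φ = a g(b) + h(b)` with
`g(t) = ik(1 + w(t))` and `h(t) = -t²/λ²`. As `d`, `d⊥` are orthonormal, the two directional
derivatives are `∂φ/∂a = g(b)` and `∂φ/∂b = a g'(b) + h'(b)`, where `g'(t) = 4it/(kλ⁴)` and
`h'(t) = -2t/λ²`. Squaring and adding yields the claim. -/

section AffineProfile

variable {E : Type*} [NormedAddCommGroup E] [InnerProductSpace ℝ E] {d e x : E}

theorem hasFDerivAt_inner_smul_comp_inner_add {F : Type*} [NormedAddCommGroup F] [NormedSpace ℝ F]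
    {g h : ℝ → F} {g' h' : F} (hg : HasDerivAt g g' ⟪x, e⟫) (hh : HasDerivAt h h' ⟪x, e⟫) :
    HasFDerivAt (fun y ↦ ⟪y, d⟫ • g ⟪y, e⟫ + h ⟪y, e⟫)
      ((innerSL ℝ d).smulRight (g ⟪x, e⟫) +
        (innerSL ℝ e).smulRight (⟪x, d⟫ • g' + h')) x := by
  have hasFDerivAt_inner (u : E) : HasFDerivAt (fun y ↦ ⟪y, u⟫) (innerSL ℝ u) x := by
    simp_rw [real_inner_comm u]
    exact (innerSL ℝ u).hasFDerivAt
  have hgx := hg.hasFDerivAt.comp x (hasFDerivAt_inner e)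
  have hhx := hh.hasFDerivAt.comp x (hasFDerivAt_inner e)
  refine (((hasFDerivAt_inner d).smul hgx).add hhx).congr_fderiv ?_
  ext v
  simp only [Function.comp_apply, add_apply, smul_apply, ContinuousLinearMap.comp_apply,
    coe_innerSL_apply, ContinuousLinearMap.toSpanSingleton_apply,
    ContinuousLinearMap.smulRight_apply, smul_add]
  module

theorem sq_fderiv_add_sq_fderiv_of_orthonormal {A : Type*} [NormedRing A] [NormedAlgebra ℝ A]
    (hde : Orthonormal ℝ ![d, e]) {g h : ℝ → A} {g' h' : A}
    (hg : HasDerivAt g g' ⟪x, e⟫) (hh : HasDerivAt h h' ⟪x, e⟫) :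
    fderiv ℝ (fun y ↦ ⟪y, d⟫ • g ⟪y, e⟫ + h ⟪y, e⟫) x d ^ 2 +
        fderiv ℝ (fun y ↦ ⟪y, d⟫ • g ⟪y, e⟫ + h ⟪y, e⟫) x e ^ 2 =
      g ⟪x, e⟫ ^ 2 + (⟪x, d⟫ • g' + h') ^ 2 := by
  have norm_d : ‖d‖ = 1 := hde.norm_eq_one 0
  have norm_e : ‖e‖ = 1 := hde.norm_eq_one 1
  have inner_de : ⟪d, e⟫ = 0 := hde.inner_eq_zero zero_ne_one
  have inner_ed : ⟪e, d⟫ = 0 := hde.inner_eq_zero one_ne_zero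
  have fderiv_d : fderiv ℝ (fun y ↦ ⟪y, d⟫ • g ⟪y, e⟫ + h ⟪y, e⟫) x d = g ⟪x, e⟫ := by
    simp [(hasFDerivAt_inner_smul_comp_inner_add hg hh).fderiv, norm_d, inner_ed]
  have fderiv_e : fderiv ℝ (fun y ↦ ⟪y, d⟫ • g ⟪y, e⟫ + h ⟪y, e⟫) x e = ⟪x, d⟫ • g' + h' := by
    simp [(hasFDerivAt_inner_smul_comp_inner_add hg hh).fderiv, norm_e, inner_de]
  rw [fderiv_d, fderiv_e]

end AffineProfile

theorem orthonormal_pair_of_rotation {d dperp : EuclideanSpace ℝ (Fin 2)} (hd : ‖d‖ = 1)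
    (hperp0 : dperp 0 = -(d 1)) (hperp1 : dperp 1 = d 0) : Orthonormal ℝ ![d, dperp] := by
  have norm_dperp : ‖dperp‖ = 1 := by
    rw [← hd, EuclideanSpace.norm_eq, EuclideanSpace.norm_eq, Fin.sum_univ_two, Fin.sum_univ_two,
      hperp0, hperp1, norm_neg, add_comm]
  have inner_dperp : ⟪d, dperp⟫ = 0 := by
    rw [PiLp.inner_apply, Fin.sum_univ_two, hperp0, hperp1]
    simp [mul_comm]
  simp [orthonormal_vecCons_iff, hd, norm_dperp, inner_dperp]

/-- The correction `w` of the Thorsos tapered wave, as a function of the transverse coordinate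
`t = x·d⊥`. -/
noncomputable def thorsosTaper (k lam t : ℝ) : ℝ :=
  1 / (k ^ 2 * lam ^ 2) * (2 * t ^ 2 / lam ^ 2 - 1)

theorem hasDerivAt_thorsosTaper (k lam t : ℝ) :
    HasDerivAt (thorsosTaper k lam) (4 * t / (k ^ 2 * lam ^ 4)) t := by
  have hsq : HasDerivAt (fun s : ℝ ↦ s ^ 2) (2 * t) t := by simpa using hasDerivAt_pow 2 t
  refine ((((hsq.const_mul 2).div_const (lam ^ 2)).sub_const 1).const_mul _).congr_deriv ?_
  ring

theorem grad_phase_sq_general {E : Type*} [NormedAddCommGroup E] [InnerProductSpace ℝ E]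
    {k lam : ℝ} (hk : k ≠ 0) (hlam : lam ≠ 0) {d e : E} (hde : Orthonormal ℝ ![d, e])
    {w : E → ℝ} (hw : ∀ x, w x = thorsosTaper k lam ⟪x, e⟫) {φ : E → ℂ}
    (hφ : ∀ x, φ x = Complex.I * k * ⟪x, d⟫ * (1 + w x) - (⟪x, e⟫ : ℂ) ^ 2 / (lam : ℂ) ^ 2)
    (x : E) :
    fderiv ℝ φ x d ^ 2 + fderiv ℝ φ x e ^ 2 =
      -(k : ℂ) ^ 2 * (1 + w x) ^ 2
      - 16 * (⟪x, d⟫ : ℂ) ^ 2 * (⟪x, e⟫ : ℂ) ^ 2 / ((k : ℂ) ^ 2 * (lam : ℂ) ^ 8)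
      - 16 * Complex.I * ⟪x, d⟫ * (⟪x, e⟫ : ℂ) ^ 2 / (k * (lam : ℂ) ^ 6)
      + 4 * (⟪x, e⟫ : ℂ) ^ 2 / (lam : ℂ) ^ 4 := by
  have hk' : (k : ℂ) ≠ 0 := Complex.ofReal_ne_zero.2 hk
  have hlam' : (lam : ℂ) ≠ 0 := Complex.ofReal_ne_zero.2 hlam
  let g : ℝ → ℂ := fun t ↦ Complex.I * k * (1 + thorsosTaper k lam t)
  let h : ℝ → ℂ := fun t ↦ -((t ^ 2 / lam ^ 2 : ℝ) : ℂ)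
  have hφ_eq : φ = fun y ↦ ⟪y, d⟫ • g ⟪y, e⟫ + h ⟪y, e⟫ := by
    funext y
    simp only [hφ, hw, g, h, Complex.real_smul]
    push_cast
    ring
  have hg (t : ℝ) : HasDerivAt g (4 * Complex.I * t / (k * (lam : ℂ) ^ 4)) t := by
    refine (((hasDerivAt_thorsosTaper k lam t).ofReal_comp.const_add 1).const_mul _).congr_deriv ?_
    push_cast
    field_simp
  have hh (t : ℝ) : HasDerivAt h (-(2 * t / (lam : ℂ) ^ 2)) t := by
    refine ((hasDerivAt_pow 2 t).div_const (lam ^ 2)).ofReal_comp.neg.congr_deriv ?_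
    norm_num
  rw [hφ_eq, sq_fderiv_add_sq_fderiv_of_orthonormal hde (hg _) (hh _), hw, Complex.real_smul]
  simp only [g]
  linear_combination ((k : ℂ) ^ 2 * (1 + thorsosTaper k lam ⟪x, e⟫) ^ 2 +
    16 * (⟪x, d⟫ : ℂ) ^ 2 * (⟪x, e⟫ : ℂ) ^ 2 / ((k : ℂ) ^ 2 * (lam : ℂ) ^ 8)) * Complex.I_sq

/-- The sum of squared directional derivatives of the complex phase
`φ(x) = ik(x·d)(1+w(x)) − (x·d⊥)²/λ²` of the Thorsos tapered wave, in the directions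
`d` and `d⊥`, equals
`−k²(1+w)² − 16(x·d)²(x·d⊥)²/(k²λ⁸) − 16i(x·d)(x·d⊥)²/(kλ⁶) + 4(x·d⊥)²/λ⁴`. -/
theorem grad_phase_sq
    (k lam : ℝ) (hk : 0 < k) (hlam : 0 < lam)
    (d dperp : EuclideanSpace ℝ (Fin 2)) (hd : ‖d‖ = 1)
    (hperp0 : dperp 0 = -(d 1)) (hperp1 : dperp 1 = d 0)
    (w : EuclideanSpace ℝ (Fin 2) → ℝ)
    (hw : ∀ x, w x = 1 / (k ^ 2 * lam ^ 2) * (2 * (⟪x, dperp⟫ : ℝ) ^ 2 / lam ^ 2 - 1))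
    (φ : EuclideanSpace ℝ (Fin 2) → ℂ)
    (hφ : ∀ x, φ x = Complex.I * (k : ℂ) * ((⟪x, d⟫ : ℝ) : ℂ) * (1 + (w x : ℂ))
      - ((⟪x, dperp⟫ : ℝ) : ℂ) ^ 2 / (lam : ℂ) ^ 2) :
    ∀ x, (fderiv ℝ φ x d) ^ 2 + (fderiv ℝ φ x dperp) ^ 2 =
      -(k : ℂ) ^ 2 * (1 + (w x : ℂ)) ^ 2
      - 16 * ((⟪x, d⟫ : ℝ) : ℂ) ^ 2 * ((⟪x, dperp⟫ : ℝ) : ℂ) ^ 2 / ((k : ℂ) ^ 2 * (lam : ℂ) ^ 8)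
      - 16 * Complex.I * ((⟪x, d⟫ : ℝ) : ℂ) * ((⟪x, dperp⟫ : ℝ) : ℂ) ^ 2 / ((k : ℂ) * (lam : ℂ) ^ 6)
      + 4 * ((⟪x, dperp⟫ : ℝ) : ℂ) ^ 2 / (lam : ℂ) ^ 4 := by
  exact grad_phase_sq_general hk.ne' hlam.ne' (orthonormal_pair_of_rotation hd hperp0 hperp1) hw hφ
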